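/- Let Φ be a Hawkes kernel matrix satisfying hypothesis (H), Ψ = Σ_{k=1}^∞ Φ^{⋆k}, Σ a diagonal D×D matrix with strictly positive diagonal entries, and let g be the associated conditional-expectation matrix g(t) = Ψ(t) + ΣΨ(−t)ᵀΣ^{−1} + (Ψ ⋆ q)(t) with q(t) = ΣΨ(−t)ᵀΣ^{−1}. Then Φ satisfies the Wiener–Hopf system: for almost every t > 0, g(t) = Φ(t) + (Φ ⋆ g)(t). -/

import Mathlib

open MeasureTheory Matrix Filter Set

/-- Entrywise matrix convolution:
`(A ⋆ B)^{ij}(t) = ∑_{k} ∫ A^{ik}(s) B^{kj}(t - s) ds`. -/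
noncomputable def mconv (D : ℕ) (A B : ℝ → Matrix (Fin D) (Fin D) ℝ) :
    ℝ → Matrix (Fin D) (Fin D) ℝ :=
  fun t => Matrix.of fun i j => ∑ k : Fin D, ∫ s : ℝ, A s i k * B (t - s) k j

/-- `mconvIter D Φ k` is the `(k+1)`-fold matrix convolution `Φ^{⋆(k+1)}`. -/
noncomputable def mconvIter (D : ℕ) (Φ : ℝ → Matrix (Fin D) (Fin D) ℝ) :
    ℕ → ℝ → Matrix (Fin D) (Fin D) ℝ
  | 0 => Φ
  | (k + 1) => mconv D Φ (mconvIter D Φ k)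

/-- `Ψ = ∑_{k=1}^∞ Φ^{⋆k}`, defined entrywise as a pointwise sum. -/
noncomputable def hawkesPsi (D : ℕ) (Φ : ℝ → Matrix (Fin D) (Fin D) ℝ) :
    ℝ → Matrix (Fin D) (Fin D) ℝ :=
  fun t => Matrix.of fun i j => ∑' k : ℕ, mconvIter D Φ k t i j

/-- The matrix `‖Φ‖` of `L¹` norms: `‖Φ‖^{ij} = ∫ φ^{ij}(t) dt` (entries nonnegative). -/
noncomputable def kernelNorm (D : ℕ) (Φ : ℝ → Matrix (Fin D) (Fin D) ℝ) :
    Matrix (Fin D) (Fin D) ℝ :=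
  Matrix.of fun i j => ∫ t : ℝ, Φ t i j

/-- A Hawkes kernel matrix: measurable, nonnegative, integrable and causal entries. -/
def IsHawkesKernel (D : ℕ) (Φ : ℝ → Matrix (Fin D) (Fin D) ℝ) : Prop :=
  (∀ i j, Measurable fun t => Φ t i j) ∧
  (∀ t, ∀ i j, 0 ≤ Φ t i j) ∧
  (∀ i j, Integrable fun t => Φ t i j) ∧
  (∀ t < (0 : ℝ), Φ t = 0)

/-- Hypothesis (H): the spectral radius of `‖Φ‖` is strictly smaller than 1. -/
def HypothesisH (D : ℕ) (Φ : ℝ → Matrix (Fin D) (Fin D) ℝ) : Prop :=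
  spectralRadius ℂ ((kernelNorm D Φ).map Complex.ofReal) < 1

/-- `q(t) = Σ Ψ(-t)ᵀ Σ⁻¹`. -/
noncomputable def hawkesQ (D : ℕ) (Φ : ℝ → Matrix (Fin D) (Fin D) ℝ)
    (S : Matrix (Fin D) (Fin D) ℝ) : ℝ → Matrix (Fin D) (Fin D) ℝ :=
  fun t => S * (hawkesPsi D Φ (-t))ᵀ * S⁻¹

/-- The conditional-expectation matrix
`g(t) = Ψ(t) + Σ Ψ(-t)ᵀ Σ⁻¹ + (Ψ ⋆ q)(t)`. -/
noncomputable def hawkesG (D : ℕ) (Φ : ℝ → Matrix (Fin D) (Fin D) ℝ)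
    (S : Matrix (Fin D) (Fin D) ℝ) : ℝ → Matrix (Fin D) (Fin D) ℝ :=
  fun t => hawkesPsi D Φ t + hawkesQ D Φ S t +
    mconv D (hawkesPsi D Φ) (hawkesQ D Φ S) t

/-- Entrywise Laplace transform `F̂(z) = ∫ F(t) e^{zt} dt`. -/
noncomputable def mlaplace (D : ℕ) (F : ℝ → Matrix (Fin D) (Fin D) ℝ) (z : ℂ) :
    Matrix (Fin D) (Fin D) ℂ :=
  Matrix.of fun i j => ∫ t : ℝ, (F t i j : ℂ) * Complex.exp (z * t)

/-!
Writing `g = Ψ + q + Ψ ⋆ q`, formally `1 + Ψ = (1 - Φ)⁻¹` for convolution, so that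
`δ + g = (1 + Ψ) ⋆ (δ + q)` and hence `(1 - Φ) ⋆ (δ + g) = δ + q`, that is `g = Φ + q + Φ ⋆ g`
almost everywhere. This holds for every integrable `q`; for the `q` of the theorem, causality of `Φ`
makes `q` vanish on `t > 0`. Convergence of the Neumann series `Ψ` in `L¹` comes from
`‖Φ^{⋆n}‖ = ‖Φ‖ⁿ` and Gelfand's formula.
-/

section SeriesOfIntegrableFunctions

variable {X E ι : Type*} [MeasurableSpace X] {μ : Measure X} [NormedAddCommGroup E]
  {F : ι → X → E} {f : X → E}

lemma tsum_lintegral_enorm_ne_top_of_summable_integral_norm (hF : ∀ n, Integrable (F n) μ)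
    (hs : Summable fun n => ∫ x, ‖F n x‖ ∂μ) : ∑' n, ∫⁻ x, ‖F n x‖ₑ ∂μ ≠ ⊤ := by
  simp_rw [← fun n => ofReal_integral_norm_eq_lintegral_enorm (hF n)]
  exact hs.tsum_ofReal_ne_top

variable [Countable ι]

lemma ae_summable_norm_of_summable_integral_norm (hF : ∀ n, Integrable (F n) μ)
    (hs : Summable fun n => ∫ x, ‖F n x‖ ∂μ) : ∀ᵐ x ∂μ, Summable fun n => ‖F n x‖ :=
  summable_norm_of_tsum_eLpNorm_ne_top le_rfl (fun n => (hF n).aestronglyMeasurable) <| by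
    simpa only [eLpNorm_one_eq_lintegral_enorm] using
      tsum_lintegral_enorm_ne_top_of_summable_integral_norm hF hs

lemma integrable_of_ae_hasSum (hF : ∀ n, Integrable (F n) μ)
    (hs : Summable fun n => ∫ x, ‖F n x‖ ∂μ) (hf : ∀ᵐ x ∂μ, HasSum (fun n => F n x) (f x)) :
    Integrable f μ := by
  refine ⟨aestronglyMeasurable_of_tendsto_ae atTop
    (fun s => (integrable_finsetSum s fun n _ => hF n).aestronglyMeasurable) hf, ?_⟩
  calc ∫⁻ x, ‖f x‖ₑ ∂μ ≤ ∫⁻ x, ∑' n, ‖F n x‖ₑ ∂μ := by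
        refine lintegral_mono_ae ?_
        filter_upwards [hf] with x hx
        exact hx.tsum_eq ▸ enorm_tsum_le_tsum_enorm
    _ = ∑' n, ∫⁻ x, ‖F n x‖ₑ ∂μ := lintegral_tsum fun n => (hF n).aestronglyMeasurable.enorm
    _ < ⊤ := (tsum_lintegral_enorm_ne_top_of_summable_integral_norm hF hs).lt_top

end SeriesOfIntegrableFunctions

section Convolution

open ContinuousLinearMap
open scoped Convolution

variable {G : Type*} [AddGroup G] [MeasurableSpace G] [MeasurableAdd₂ G] [MeasurableNeg G]
  {μ : Measure G} [SFinite μ] [μ.IsAddRightInvariant]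

section Bilinear

variable {𝕜 E E' F : Type*} [NontriviallyNormedField 𝕜] [NormedAddCommGroup E]
  [NormedAddCommGroup E'] [NormedAddCommGroup F] [NormedSpace 𝕜 E] [NormedSpace 𝕜 E']
  [NormedSpace 𝕜 F] [NormedSpace ℝ F] (L : E →L[𝕜] E' →L[𝕜] F)

lemma ae_hasSum_convolution {ι : Type*} [Countable ι] {f : G → E} {K : ι → G → E'} {k : G → E'}
    (hf : Integrable f μ) (hK : ∀ n, Integrable (K n) μ)
    (hs : Summable fun n => ∫ x, ‖K n x‖ ∂μ) (hk : ∀ᵐ x ∂μ, HasSum (fun n => K n x) (k x)) :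
    ∀ᵐ x ∂μ, HasSum (fun n => (f ⋆[L, μ] K n) x) ((f ⋆[L, μ] k) x) := by
  have hnorm := ae_summable_norm_of_summable_integral_norm hK hs
  have hint : Integrable (fun x => ∑' n, ‖K n x‖) μ :=
    integrable_of_ae_hasSum (fun n => (hK n).norm) (by simpa only [norm_norm] using hs)
      (hnorm.mono fun x hx => hx.hasSum)
  filter_upwards [hf.norm.ae_convolution_exists (mul ℝ ℝ) hint,
    ae_all_iff.2 fun n => hf.ae_convolution_exists L (hK n)] with x hbound hexists
  have hshift := quasiMeasurePreserving_sub_left_of_right_invariant μ x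
  refine hasSum_integral_of_dominated_convergence
    (fun n y => ‖L‖ * (‖f y‖ * ‖K n (x - y)‖)) (fun n => (hexists n).aestronglyMeasurable)
    (fun n => ae_of_all _ fun y => ?_) ?_ ?_ ?_
  · simpa only [mul_assoc] using L.le_opNorm₂ (f y) (K n (x - y))
  · filter_upwards [hshift.ae hnorm] with y hy using (hy.mul_left _).mul_left _
  · have hbound : Integrable (fun y => ‖f y‖ * ∑' n, ‖K n (x - y)‖) μ := hbound
    simpa only [tsum_mul_left] using hbound.const_mul ‖L‖
  · filter_upwards [hshift.ae hk] with y hy using hy.mapL (L (f y))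

end Bilinear

lemma ae_eq_add_convolution_of_hasSum {𝕜 E E' : Type*} [NontriviallyNormedField 𝕜]
    [NormedAddCommGroup E] [NormedAddCommGroup E'] [NormedSpace 𝕜 E] [NormedSpace 𝕜 E']
    [NormedSpace ℝ E'] (L : E →L[𝕜] E' →L[𝕜] E') {f : G → E} {K : ℕ → G → E'} {k : G → E'}
    (hf : Integrable f μ) (hK : ∀ n, Integrable (K n) μ)
    (hs : Summable fun n => ∫ x, ‖K n x‖ ∂μ) (hk : ∀ᵐ x ∂μ, HasSum (fun n => K n x) (k x))
    (hrec : ∀ n, K (n + 1) =ᵐ[μ] f ⋆[L, μ] K n) :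
    k =ᵐ[μ] K 0 + f ⋆[L, μ] k := by
  filter_upwards [hk, ae_hasSum_convolution L hf hK hs hk, ae_all_iff.2 hrec]
    with x hsum hsum_conv hrec_x
  simp only [← hrec_x] at hsum_conv
  exact hsum.unique hsum_conv.zero_add

variable {𝔸 : Type*} [NormedRing 𝔸] [NormedAlgebra ℝ 𝔸] {f g h : G → 𝔸}

lemma convolution_mul_assoc_ae [CompleteSpace 𝔸] (hf : Integrable f μ) (hg : Integrable g μ)
    (hh : Integrable h μ) :
    (f ⋆[mul ℝ 𝔸, μ] g) ⋆[mul ℝ 𝔸, μ] h =ᵐ[μ] f ⋆[mul ℝ 𝔸, μ] g ⋆[mul ℝ 𝔸, μ] h := by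
  filter_upwards [hf.norm.ae_convolution_exists (mul ℝ ℝ)
    (hg.norm.integrable_convolution (mul ℝ ℝ) hh.norm)] with x hx
  exact convolution_assoc _ _ _ _ mul_assoc hf.1 hg.1 hh.1 (hf.ae_convolution_exists _ hg)
    (hg.norm.ae_convolution_exists _ hh.norm) hx

theorem ae_eq_add_convolution_of_resolvent [CompleteSpace 𝔸] {φ ψ q : G → 𝔸}
    (hφ : Integrable φ μ) (hψ : Integrable ψ μ) (hq : Integrable q μ)
    (hres : ψ =ᵐ[μ] φ + φ ⋆[mul ℝ 𝔸, μ] ψ) :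
    ψ + q + ψ ⋆[mul ℝ 𝔸, μ] q =ᵐ[μ]
      φ + q + φ ⋆[mul ℝ 𝔸, μ] (ψ + q + ψ ⋆[mul ℝ 𝔸, μ] q) := by
  have hφψ := hφ.integrable_convolution (mul ℝ 𝔸) hψ
  have hψq := hψ.integrable_convolution (mul ℝ 𝔸) hq
  filter_upwards [hres, convolution_mul_assoc_ae hφ hψ hq,
    hφ.ae_convolution_exists (mul ℝ 𝔸) hψ, hφ.ae_convolution_exists (mul ℝ 𝔸) hq,
    hφψ.ae_convolution_exists (mul ℝ 𝔸) hq, hφ.ae_convolution_exists (mul ℝ 𝔸) (hψ.add hq),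
    hφ.ae_convolution_exists (mul ℝ 𝔸) hψq] with t hres_t hassoc eφψ eφq eφψq eφadd eφconv
  have hleft : (ψ ⋆[mul ℝ 𝔸, μ] q) t =
      (φ ⋆[mul ℝ 𝔸, μ] q) t + (φ ⋆[mul ℝ 𝔸, μ] ψ ⋆[mul ℝ 𝔸, μ] q) t :=
    calc (ψ ⋆[mul ℝ 𝔸, μ] q) t = ((φ + φ ⋆[mul ℝ 𝔸, μ] ψ) ⋆[mul ℝ 𝔸, μ] q) t :=
          congrFun (convolution_congr (mul ℝ 𝔸) hres (EventuallyEq.refl _ q)) t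
      _ = _ := by rw [eφq.add_distrib eφψq, hassoc]
  have hright : (φ ⋆[mul ℝ 𝔸, μ] (ψ + q + ψ ⋆[mul ℝ 𝔸, μ] q)) t =
      (φ ⋆[mul ℝ 𝔸, μ] ψ) t + (φ ⋆[mul ℝ 𝔸, μ] q) t +
        (φ ⋆[mul ℝ 𝔸, μ] ψ ⋆[mul ℝ 𝔸, μ] q) t := by
    rw [eφadd.distrib_add eφconv, eφψ.distrib_add eφq]
  simp only [Pi.add_apply] at hres_t ⊢
  rw [hright, hleft, hres_t]
  abel

end Convolution

lemma summable_norm_pow_of_spectralRadius_lt_one {A : Type*} [NormedRing A] [NormedAlgebra ℂ A]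
    [CompleteSpace A] {a : A} (ha : spectralRadius ℂ a < 1) : Summable fun n : ℕ => ‖a ^ n‖ := by
  obtain ⟨r, har, hr1⟩ := ENNReal.lt_iff_exists_nnreal_btwn.1 ha
  have hroot := (spectrum.pow_nnnorm_pow_one_div_tendsto_nhds_spectralRadius a).eventually_lt_const
    har
  refine Summable.of_norm_bounded_eventually_nat (g := fun n => (r : ℝ) ^ n)
    (summable_geometric_of_lt_one r.coe_nonneg (by exact_mod_cast hr1)) ?_
  filter_upwards [hroot, eventually_gt_atTop 0] with n hn hn0
  have hpow : (‖a ^ n‖₊ : ENNReal) ≤ (r : ENNReal) ^ n := by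
    simpa only [one_div, ENNReal.rpow_natCast] using
      (ENNReal.rpow_inv_le_iff (Nat.cast_pos.2 hn0)).1 (one_div (n : ℝ) ▸ hn.le)
  rw [norm_norm]
  exact_mod_cast hpow

section MatrixValued

open scoped Matrix.Norms.L2Operator

variable {X m n 𝕜 : Type*} [MeasurableSpace X] {μ : Measure X} [Fintype m] [Fintype n]
  [DecidableEq n] [RCLike 𝕜]

lemma matrix_eq_sum_smul_single {R : Type*} [Semiring R] [DecidableEq m] (A : Matrix m n R) :
    A = ∑ i, ∑ j, A i j • single i j 1 := by
  simpa only [smul_single, smul_eq_mul, mul_one] using matrix_eq_sum_single A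

lemma integrable_matrix_iff {F : X → Matrix m n 𝕜} :
    Integrable F μ ↔ ∀ i j, Integrable (fun x => F x i j) μ := by
  classical
  refine ⟨fun hF i j => (entryLinearMap 𝕜 𝕜 i j).toContinuousLinearMap.integrable_comp hF,
    fun hF => ?_⟩
  rw [funext fun x => matrix_eq_sum_smul_single (F x)]
  exact integrable_finsetSum _ fun i _ => integrable_finsetSum _ fun j _ =>
    (hF i j).smul_const (single i j (1 : 𝕜))

lemma integral_matrix_apply {F : X → Matrix m n ℝ} (hF : Integrable F μ) (i : m) (j : n) :
    (∫ x, F x ∂μ) i j = ∫ x, F x i j ∂μ :=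
  ((entryLinearMap ℝ ℝ i j).toContinuousLinearMap.integral_comp_comm hF).symm

variable [DecidableEq m]

lemma l2_opNorm_le_sum_norm_mul_norm_single (A : Matrix m n 𝕜) :
    ‖A‖ ≤ ∑ i, ∑ j, ‖A i j‖ * ‖(single i j 1 : Matrix m n 𝕜)‖ := by
  conv_lhs => rw [matrix_eq_sum_smul_single A]
  exact norm_sum_le_of_le _ fun i _ => norm_sum_le_of_le _ fun j _ => (norm_smul _ _).le

lemma integral_l2_opNorm_le_sum {F : X → Matrix m n 𝕜}
    (hF : ∀ i j, Integrable (fun x => F x i j) μ) :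
    ∫ x, ‖F x‖ ∂μ ≤ ∑ i, ∑ j, (∫ x, ‖F x i j‖ ∂μ) * ‖(single i j 1 : Matrix m n 𝕜)‖ := by
  have hint (i : m) (j : n) :
      Integrable (fun x => ‖F x i j‖ * ‖(single i j 1 : Matrix m n 𝕜)‖) μ :=
    (hF i j).norm.mul_const _
  calc ∫ x, ‖F x‖ ∂μ
      ≤ ∫ x, ∑ i, ∑ j, ‖F x i j‖ * ‖(single i j 1 : Matrix m n 𝕜)‖ ∂μ :=
        integral_mono (integrable_matrix_iff.2 hF).norm
          (integrable_finsetSum _ fun i _ => integrable_finsetSum _ fun j _ => hint i j)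
          fun x => l2_opNorm_le_sum_norm_mul_norm_single (F x)
    _ = ∑ i, ∑ j, (∫ x, ‖F x i j‖ ∂μ) * ‖(single i j 1 : Matrix m n 𝕜)‖ := by
        rw [integral_finsetSum _ fun i _ => integrable_finsetSum _ fun j _ => hint i j]
        refine Finset.sum_congr rfl fun i _ => ?_
        rw [integral_finsetSum _ fun j _ => hint i j]
        exact Finset.sum_congr rfl fun j _ => integral_mul_const _ _

end MatrixValued

section MatrixConvolution

open ContinuousLinearMap
open scoped Convolution Matrix.Norms.L2Operator

variable {D : ℕ} {A B Φ q : ℝ → Matrix (Fin D) (Fin D) ℝ}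

lemma mconv_apply (t : ℝ) (i j : Fin D) :
    mconv D A B t i j = ∑ k, ∫ s, A s i k * B (t - s) k j := rfl

lemma mconv_ae_eq_convolution (hA : Integrable A) (hB : Integrable B) :
    mconv D A B =ᵐ[volume] A ⋆[mul ℝ (Matrix (Fin D) (Fin D) ℝ)] B := by
  have hentry (i k j : Fin D) : ∀ᵐ t, Integrable fun s => A s i k * B (t - s) k j :=
    (integrable_matrix_iff.1 hA i k).ae_convolution_exists (mul ℝ ℝ)
      (integrable_matrix_iff.1 hB k j)
  filter_upwards [hA.ae_convolution_exists (mul ℝ (Matrix (Fin D) (Fin D) ℝ)) hB,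
    ae_all_iff.2 fun i => ae_all_iff.2 fun k => ae_all_iff.2 (hentry i k)] with t ht hentry_t
  ext i j
  calc mconv D A B t i j = ∫ s, ∑ k, A s i k * B (t - s) k j :=
        (integral_finsetSum Finset.univ fun k _ => hentry_t i k j).symm
    _ = (A ⋆[mul ℝ (Matrix (Fin D) (Fin D) ℝ)] B) t i j := (integral_matrix_apply ht i j).symm

lemma integrable_mconv (hA : Integrable A) (hB : Integrable B) : Integrable (mconv D A B) := by
  rw [integrable_congr (mconv_ae_eq_convolution hA hB)]
  exact hA.integrable_convolution (mul ℝ (Matrix (Fin D) (Fin D) ℝ)) hB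

lemma mconv_nonneg (hA : ∀ t i j, 0 ≤ A t i j) (hB : ∀ t i j, 0 ≤ B t i j) (t : ℝ)
    (i j : Fin D) : 0 ≤ mconv D A B t i j := by
  rw [mconv_apply]
  exact Finset.sum_nonneg fun k _ => integral_nonneg fun s => mul_nonneg (hA s i k) (hB (t - s) k j)

lemma mconv_eq_zero_of_neg (hA : ∀ t < 0, A t = 0) (hB : ∀ t < 0, B t = 0) {t : ℝ} (ht : t < 0) :
    mconv D A B t = 0 := by
  ext i j
  rw [mconv_apply]
  refine Finset.sum_eq_zero fun k _ => integral_eq_zero_of_ae (ae_of_all _ fun s => ?_)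
  rcases lt_or_ge s 0 with hs | hs
  · simp [hA s hs]
  · simp [hB (t - s) (by linarith)]

lemma kernelNorm_eq_integral (hA : Integrable A) : kernelNorm D A = ∫ t, A t := by
  ext i j
  exact (integral_matrix_apply hA i j).symm

lemma kernelNorm_mconv (hA : Integrable A) (hB : Integrable B) :
    kernelNorm D (mconv D A B) = kernelNorm D A * kernelNorm D B := by
  rw [kernelNorm_eq_integral (integrable_mconv hA hB), kernelNorm_eq_integral hA,
    kernelNorm_eq_integral hB, integral_congr_ae (mconv_ae_eq_convolution hA hB),
    integral_convolution (mul ℝ (Matrix (Fin D) (Fin D) ℝ)) hA hB, mul_apply']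

lemma integrable_mconvIter (hΦ : Integrable Φ) : ∀ n, Integrable (mconvIter D Φ n)
  | 0 => hΦ
  | n + 1 => integrable_mconv hΦ (integrable_mconvIter hΦ n)

lemma mconvIter_nonneg (hΦ : ∀ t i j, 0 ≤ Φ t i j) : ∀ n t i j, 0 ≤ mconvIter D Φ n t i j
  | 0 => hΦ
  | n + 1 => mconv_nonneg hΦ (mconvIter_nonneg hΦ n)

lemma mconvIter_eq_zero_of_neg (hΦ : ∀ t < 0, Φ t = 0) : ∀ n, ∀ t < 0, mconvIter D Φ n t = 0
  | 0 => hΦ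
  | n + 1 => fun _ => mconv_eq_zero_of_neg hΦ (mconvIter_eq_zero_of_neg hΦ n)

lemma kernelNorm_mconvIter (hΦ : Integrable Φ) (n : ℕ) :
    kernelNorm D (mconvIter D Φ n) = kernelNorm D Φ ^ (n + 1) := by
  induction n with
  | zero => rw [zero_add, pow_one, mconvIter]
  | succ n ih => rw [mconvIter, kernelNorm_mconv hΦ (integrable_mconvIter hΦ n), ih, ← pow_succ']

lemma summable_kernelNorm_pow_apply (hH : HypothesisH D Φ) (i j : Fin D) :
    Summable fun n : ℕ => (kernelNorm D Φ ^ n) i j := by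
  have hpow : Summable fun n : ℕ => ((kernelNorm D Φ).map Complex.ofReal) ^ n :=
    (summable_norm_pow_of_spectralRadius_lt_one hH).of_norm
  have hmap (n : ℕ) : ((kernelNorm D Φ).map Complex.ofReal) ^ n =
      (kernelNorm D Φ ^ n).map Complex.ofReal :=
    (map_pow Complex.ofRealHom.mapMatrix (kernelNorm D Φ) n).symm
  simp only [hmap] at hpow
  exact Complex.summable_ofReal.1 (Pi.summable.1 (Pi.summable.1 hpow i) j)

lemma summable_integral_norm_mconvIter (hΦ0 : ∀ t i j, 0 ≤ Φ t i j) (hΦ : Integrable Φ)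
    (hH : HypothesisH D Φ) : Summable fun n => ∫ t, ‖mconvIter D Φ n t‖ := by
  refine Summable.of_nonneg_of_le (fun n => integral_nonneg fun t => norm_nonneg _)
    (fun n => integral_l2_opNorm_le_sum (integrable_matrix_iff.1 (integrable_mconvIter hΦ n)))
    (summable_sum fun i _ => summable_sum fun j _ => Summable.mul_right _ ?_)
  have hnorm (n : ℕ) : ∫ t, ‖mconvIter D Φ n t i j‖ = (kernelNorm D Φ ^ (n + 1)) i j := by
    simp only [Real.norm_of_nonneg (mconvIter_nonneg hΦ0 n _ i j), ← kernelNorm_mconvIter hΦ]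
    rfl
  simpa only [hnorm] using (summable_nat_add_iff 1).2 (summable_kernelNorm_pow_apply hH i j)

lemma ae_hasSum_hawkesPsi (hΦ0 : ∀ t i j, 0 ≤ Φ t i j) (hΦ : Integrable Φ)
    (hH : HypothesisH D Φ) :
    ∀ᵐ t, HasSum (fun n => mconvIter D Φ n t) (hawkesPsi D Φ t) := by
  filter_upwards [ae_summable_norm_of_summable_integral_norm (integrable_mconvIter hΦ)
    (summable_integral_norm_mconvIter hΦ0 hΦ hH)] with t ht
  exact Pi.hasSum.2 fun i => Pi.hasSum.2 fun j =>
    (Pi.summable.1 (Pi.summable.1 ht.of_norm i) j).hasSum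

lemma integrable_hawkesPsi (hΦ0 : ∀ t i j, 0 ≤ Φ t i j) (hΦ : Integrable Φ)
    (hH : HypothesisH D Φ) : Integrable (hawkesPsi D Φ) :=
  integrable_of_ae_hasSum (integrable_mconvIter hΦ) (summable_integral_norm_mconvIter hΦ0 hΦ hH)
    (ae_hasSum_hawkesPsi hΦ0 hΦ hH)

lemma hawkesPsi_ae_eq_add_convolution (hΦ0 : ∀ t i j, 0 ≤ Φ t i j) (hΦ : Integrable Φ)
    (hH : HypothesisH D Φ) :
    hawkesPsi D Φ =ᵐ[volume] Φ + Φ ⋆[mul ℝ (Matrix (Fin D) (Fin D) ℝ)] hawkesPsi D Φ :=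
  ae_eq_add_convolution_of_hasSum (mul ℝ (Matrix (Fin D) (Fin D) ℝ)) hΦ (integrable_mconvIter hΦ)
    (summable_integral_norm_mconvIter hΦ0 hΦ hH) (ae_hasSum_hawkesPsi hΦ0 hΦ hH)
    fun n => mconv_ae_eq_convolution hΦ (integrable_mconvIter hΦ n)

lemma hawkesPsi_eq_zero_of_neg (hΦ : ∀ t < 0, Φ t = 0) {t : ℝ} (ht : t < 0) :
    hawkesPsi D Φ t = 0 := by
  ext i j
  simp [hawkesPsi, mconvIter_eq_zero_of_neg hΦ _ t ht]

lemma hawkesQ_eq_zero_of_pos (hΦ : ∀ t < 0, Φ t = 0) (S : Matrix (Fin D) (Fin D) ℝ) {t : ℝ}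
    (ht : 0 < t) : hawkesQ D Φ S t = 0 := by
  simp [hawkesQ, hawkesPsi_eq_zero_of_neg hΦ (neg_lt_zero.2 ht)]

lemma integrable_hawkesQ (hΨ : Integrable (hawkesPsi D Φ)) (S : Matrix (Fin D) (Fin D) ℝ) :
    Integrable (hawkesQ D Φ S) := by
  have htranspose : Integrable fun t => (hawkesPsi D Φ (-t))ᵀ :=
    integrable_matrix_iff.2 fun i j => integrable_matrix_iff.1 hΨ.comp_neg j i
  exact (htranspose.const_mul S).mul_const S⁻¹

lemma hawkesG_eq (S : Matrix (Fin D) (Fin D) ℝ) :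
    hawkesG D Φ S =
      hawkesPsi D Φ + hawkesQ D Φ S + mconv D (hawkesPsi D Φ) (hawkesQ D Φ S) := rfl

theorem hawkes_wienerHopf_general (hΦ0 : ∀ t i j, 0 ≤ Φ t i j) (hΦ : Integrable Φ)
    (hH : HypothesisH D Φ) (hq : Integrable q) :
    hawkesPsi D Φ + q + mconv D (hawkesPsi D Φ) q =ᵐ[volume]
      Φ + q + mconv D Φ (hawkesPsi D Φ + q + mconv D (hawkesPsi D Φ) q) := by
  have hΨ := integrable_hawkesPsi hΦ0 hΦ hH
  have hg := (hΨ.add hq).add (integrable_mconv hΨ hq)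
  have hg_eq := (EventuallyEq.refl _ (hawkesPsi D Φ + q)).add (mconv_ae_eq_convolution hΨ hq)
  refine hg_eq.trans <| (ae_eq_add_convolution_of_resolvent hΦ hΨ hq
    (hawkesPsi_ae_eq_add_convolution hΦ0 hΦ hH)).trans ?_
  rw [← convolution_congr (mul ℝ (Matrix (Fin D) (Fin D) ℝ)) (EventuallyEq.refl _ Φ) hg_eq]
  exact (EventuallyEq.refl _ (Φ + q)).add (mconv_ae_eq_convolution hΦ hg).symm

end MatrixConvolution

/-- The Hawkes kernel matrix satisfies the Wiener-Hopf system
`g(t) = Φ(t) + (Φ ⋆ g)(t)` for almost every `t > 0`. -/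
theorem hawkes_wienerHopf (D : ℕ) (hD : 0 < D)
    (Φ : ℝ → Matrix (Fin D) (Fin D) ℝ)
    (hΦ : IsHawkesKernel D Φ) (hH : HypothesisH D Φ)
    (S : Matrix (Fin D) (Fin D) ℝ) (hSdiag : S.IsDiag) (hSpos : ∀ i, 0 < S i i) :
    ∀ᵐ t : ℝ, 0 < t → hawkesG D Φ S t = Φ t + mconv D Φ (hawkesG D Φ S) t := by
  have hint := integrable_matrix_iff.2 hΦ.2.2.1
  filter_upwards [hawkes_wienerHopf_general hΦ.2.1 hint hH
    (integrable_hawkesQ (integrable_hawkesPsi hΦ.2.1 hint hH) S)] with t hg ht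
  rw [← hawkesG_eq] at hg
  simpa only [Pi.add_apply, hawkesQ_eq_zero_of_pos hΦ.2.2.2 S ht, add_zero] using hg
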